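/- Let 𝒮 be a GUS sample of R = Π_{i ∈ ι} R_i with parameters a and b, and let f : R → ℝ. For S ⊆ ι define the deterministic quantity y_S = Σ_{u ∈ Π_{i ∈ S} R_i} ( Σ_{v ∈ Π_{i ∈ ι∖S} R_i} f(u ⊎ v) )² and the random variable Y_S = Σ_{u ∈ Π_{i ∈ S} R_i} ( Σ_{v : u ⊎ v ∈ 𝒮} f(u ⊎ v) )², where u ⊎ v denotes the tuple in R whose i-th coordinate is u_i for i ∈ S and v_i for i ∉ S. Then E[Y_S] = Σ_{T ⊆ ι∖S} d_{S,T} · y_{S∪T}, where d_{S,T} = Σ_{U ⊆ T} (−1)^{|T|−|U|} b(S ∪ U). -/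

import Mathlib

/-!
Expanding the squares, `Y_S` is the sum of `f t * f t'` over the ordered pairs of sampled tuples
that agree on `S`, so its expectation weights each pair agreeing on `S` by `b (T(t, t'))`.
Möbius inversion on the subsets of `T(t, t') \ S` writes `b (T(t, t'))` as the sum of the `d_{S,T}`
over the `T ⊆ Sᶜ` such that `t` and `t'` agree on `S ∪ T`. Summing over the pairs first, each
`d_{S,T}` gets multiplied by the sum over the pairs agreeing on `S ∪ T`, which is `y_{S ∪ T}`.
-/

open MeasureTheory Finset

/-- Combine a tuple `u` indexed by `S` with a tuple `v` indexed by `Sᶜ` into a full tuple. -/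
def mergeTuple {ι : Type*} [Fintype ι] [DecidableEq ι] {R : ι → Type*}
    (S : Finset ι) (u : ∀ i : {x // x ∈ S}, R i.1) (v : ∀ i : {x // x ∈ Sᶜ}, R i.1) :
    ∀ i, R i :=
  fun i => if h : i ∈ S then u ⟨i, h⟩ else v ⟨i, Finset.mem_compl.mpr h⟩

section MoebiusInversion

variable {α 𝕜 : Type*} [Ring 𝕜]

/-- The Möbius transform of a set function `h` on the lattice of finite sets. The coefficient
`d_{S,T}` is the value at `T` of the transform of `fun U ↦ b (S ∪ U)`. -/
def moebiusTransform (h : Finset α → 𝕜) (T : Finset α) : 𝕜 :=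
  ∑ U ∈ T.powerset, (-1 : 𝕜) ^ (T.card - U.card) * h U

lemma moebiusTransform_insert [DecidableEq α] (h : Finset α → 𝕜) {x : α} {T : Finset α}
    (hx : x ∉ T) :
    moebiusTransform h (insert x T) =
      moebiusTransform (fun U ↦ h (insert x U)) T - moebiusTransform h T := by
  have without_x : ∀ U ∈ T.powerset,
      (-1 : 𝕜) ^ ((insert x T).card - U.card) * h U = -((-1) ^ (T.card - U.card) * h U) := by
    intro U hU
    have hcard : U.card ≤ T.card := card_le_card (mem_powerset.mp hU)
    rw [card_insert_of_notMem hx, Nat.sub_add_comm hcard, pow_succ, mul_neg_one, neg_mul]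
  have with_x : ∀ U ∈ T.powerset,
      (-1 : 𝕜) ^ ((insert x T).card - (insert x U).card) * h (insert x U) =
        (-1) ^ (T.card - U.card) * h (insert x U) := by
    intro U hU
    have hxU : x ∉ U := fun hxU ↦ hx (mem_powerset.mp hU hxU)
    rw [card_insert_of_notMem hx, card_insert_of_notMem hxU, Nat.add_sub_add_right]
  simp only [moebiusTransform]
  rw [sum_powerset_insert hx, sum_congr rfl without_x, sum_congr rfl with_x, sum_neg_distrib,
    neg_add_eq_sub]

lemma sum_powerset_moebiusTransform (h : Finset α → 𝕜) (W : Finset α) :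
    ∑ T ∈ W.powerset, moebiusTransform h T = h W := by
  classical
  induction W using Finset.induction_on generalizing h with
  | empty => simp [moebiusTransform]
  | insert x W hx ih =>
    have hrec : ∀ T ∈ W.powerset, moebiusTransform h (insert x T) =
        moebiusTransform (fun U ↦ h (insert x U)) T - moebiusTransform h T :=
      fun T hT ↦ moebiusTransform_insert h fun hxT ↦ hx (mem_powerset.mp hT hxT)
    rw [sum_powerset_insert hx, sum_congr rfl hrec, sum_sub_distrib, add_sub_cancel, ih]

lemma powerset_compl_filter_union_subset [Fintype α] [DecidableEq α] {S A : Finset α}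
    (hS : S ⊆ A) : {T ∈ Sᶜ.powerset | S ∪ T ⊆ A} = (A \ S).powerset := by
  ext T
  simp only [mem_filter, mem_powerset, union_subset_iff, hS, true_and, subset_sdiff,
    subset_compl_iff_disjoint_right, and_comm]

lemma sum_moebiusTransform_filter_union_subset [Fintype α] [DecidableEq α] (b : Finset α → 𝕜)
    {S A : Finset α} (hS : S ⊆ A) :
    ∑ T ∈ Sᶜ.powerset with S ∪ T ⊆ A, moebiusTransform (fun U ↦ b (S ∪ U)) T = b A := by
  rw [powerset_compl_filter_union_subset hS, sum_powerset_moebiusTransform,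
    union_sdiff_of_subset hS]

lemma sum_moebiusTransform_smul_ite [Fintype α] [DecidableEq α] {M : Type*} [AddCommMonoid M]
    [Module 𝕜 M] (b : Finset α → 𝕜) (S A : Finset α) (m : M) :
    ∑ T ∈ Sᶜ.powerset,
        moebiusTransform (fun U ↦ b (S ∪ U)) T • (if S ∪ T ⊆ A then m else 0) =
      if S ⊆ A then b A • m else 0 := by
  simp only [smul_ite, smul_zero]
  rw [← sum_filter, ← sum_smul]
  split_ifs with hS
  · rw [sum_moebiusTransform_filter_union_subset b hS]
  · rw [filter_false_of_mem fun T _ hT ↦ hS (subset_union_left.trans hT), sum_empty, zero_smul]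

end MoebiusInversion

section GroupSums

variable {ι : Type*} [Fintype ι] {R : ι → Type*}

/-- The set `T(t, t')` of the coordinates on which the tuples `t` and `t'` agree. -/
def agreementSet [∀ i, DecidableEq (R i)] (t t' : ∀ i, R i) : Finset ι :=
  univ.filter fun i ↦ t i = t' i

lemma subset_agreementSet_iff [∀ i, DecidableEq (R i)] {S : Finset ι} {t t' : ∀ i, R i} :
    S ⊆ agreementSet t t' ↔ ∀ i ∈ S, t i = t' i := by
  simp only [agreementSet, subset_iff, mem_filter_univ]

variable [DecidableEq ι]

/-- `mergeTuple S` as an equivalence, whose inverse restricts a tuple to `S` and to `Sᶜ`. -/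
def mergeTupleEquiv (S : Finset ι) :
    ((∀ i : {x // x ∈ S}, R i.1) × (∀ i : {x // x ∈ Sᶜ}, R i.1)) ≃ (∀ i, R i) where
  toFun p := mergeTuple S p.1 p.2
  invFun t := (S.restrict t, Sᶜ.restrict t)
  left_inv p := by
    ext i
    · simp [mergeTuple]
    · simp [mergeTuple, mem_compl.mp i.2]
  right_inv t := by
    ext i
    simp [mergeTuple]

lemma sum_mergeTuple [∀ i, Fintype (R i)] {M : Type*} [AddCommMonoid M] (S : Finset ι)
    (g : (∀ i, R i) → M) :
    ∑ u, ∑ v, g (mergeTuple S u v) = ∑ t, g t := by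
  rw [← (mergeTupleEquiv S).sum_comp g, Fintype.sum_prod_type]
  rfl

variable [∀ i, DecidableEq (R i)]

lemma subset_agreementSet_mergeTuple_iff {S : Finset ι} {u u' : ∀ i : {x // x ∈ S}, R i.1}
    {v v' : ∀ i : {x // x ∈ Sᶜ}, R i.1} :
    S ⊆ agreementSet (mergeTuple S u v) (mergeTuple S u' v') ↔ u = u' := by
  simp +contextual [subset_agreementSet_iff, mergeTuple, funext_iff]

variable [∀ i, Fintype (R i)] {A : Type*}

/-- The quantity `y_S` of the function `f`: the sum of the squared totals of `f` over the groups
of tuples with given coordinates in `S`. Applied to `f` set to zero off a sample, it is `Y_S`. -/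
def groupSumSq [Semiring A] (S : Finset ι) (f : (∀ i, R i) → A) : A :=
  ∑ u : ∀ i : {x // x ∈ S}, R i.1,
    (∑ v : ∀ i : {x // x ∈ Sᶜ}, R i.1, f (mergeTuple S u v)) ^ 2

lemma groupSumSq_eq_sum_pairs [Semiring A] (S : Finset ι) (f : (∀ i, R i) → A) :
    groupSumSq S f = ∑ t, ∑ t', if S ⊆ agreementSet t t' then f t * f t' else 0 := by
  simp only [← sum_mergeTuple S, subset_agreementSet_mergeTuple_iff]
  refine sum_congr rfl fun u _ ↦ ?_
  rw [sq, sum_mul_sum]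
  refine sum_congr rfl fun v _ ↦ ?_
  rw [sum_comm]
  simp only [sum_ite_eq, mem_univ, if_true]

lemma sum_moebiusTransform_smul_groupSumSq {𝕜 : Type*} [Ring 𝕜] [Semiring A] [Module 𝕜 A]
    (b : Finset ι → 𝕜) (S : Finset ι) (f : (∀ i, R i) → A) :
    ∑ T ∈ Sᶜ.powerset, moebiusTransform (fun U ↦ b (S ∪ U)) T • groupSumSq (S ∪ T) f =
      ∑ t, ∑ t', if S ⊆ agreementSet t t' then b (agreementSet t t') • (f t * f t') else 0 := by
  simp only [groupSumSq_eq_sum_pairs, smul_sum]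
  rw [sum_comm]
  refine sum_congr rfl fun t _ ↦ ?_
  rw [sum_comm]
  exact sum_congr rfl fun t' _ ↦ sum_moebiusTransform_smul_ite b S (agreementSet t t') _

end GroupSums

section Expectation

variable {Ω A : Type*} {p q : Ω → Prop} [DecidablePred p] [DecidablePred q]

lemma ite_mul_ite_eq_indicator_inter [MulZeroClass A] (x y : A) :
    (fun ω ↦ (if p ω then x else 0) * (if q ω then y else 0)) =
      ({ω | p ω} ∩ {ω | q ω}).indicator fun _ ↦ x * y := by
  ext ω
  simp only [ite_zero_mul_ite_zero, Set.indicator_apply, Set.mem_inter_iff, Set.mem_ofPred_eq]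

variable [MeasurableSpace Ω] {μ : Measure Ω} [NormedRing A]

lemma integrable_ite_mul_ite [IsFiniteMeasure μ]
    (hp : MeasurableSet {ω | p ω}) (hq : MeasurableSet {ω | q ω}) (x y : A) :
    Integrable (fun ω ↦ (if p ω then x else 0) * (if q ω then y else 0)) μ := by
  rw [ite_mul_ite_eq_indicator_inter]
  exact (integrable_const (x * y)).indicator (hp.inter hq)

lemma integral_ite_mul_ite [NormedAlgebra ℝ A] [CompleteSpace A]
    (hp : MeasurableSet {ω | p ω}) (hq : MeasurableSet {ω | q ω}) (x y : A) :
    ∫ ω, (if p ω then x else 0) * (if q ω then y else 0) ∂μ =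
      μ.real {ω | p ω ∧ q ω} • (x * y) := by
  rw [ite_mul_ite_eq_indicator_inter]
  exact integral_indicator_const (x * y) (hp.inter hq)

end Expectation

section Sampling

variable {ι : Type*} [Fintype ι] [DecidableEq ι]
  {R : ι → Type*} [∀ i, Fintype (R i)] [∀ i, DecidableEq (R i)]
  {Ω : Type*} [MeasurableSpace Ω] (μ : Measure Ω) [IsFiniteMeasure μ]
  {A : Type*} [NormedRing A] [NormedAlgebra ℝ A] [CompleteSpace A]

lemma integral_groupSumSq_sample
    (𝒮 : Ω → Finset (∀ i, R i)) (hmeas : ∀ t, MeasurableSet {ω | t ∈ 𝒮 ω})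
    (f : (∀ i, R i) → A) (S : Finset ι) :
    ∫ ω, groupSumSq S (fun t ↦ if t ∈ 𝒮 ω then f t else 0) ∂μ =
      ∑ t, ∑ t', if S ⊆ agreementSet t t' then
        μ.real {ω | t ∈ 𝒮 ω ∧ t' ∈ 𝒮 ω} • (f t * f t') else 0 := by
  have hint : ∀ t t', Integrable (fun ω ↦ if S ⊆ agreementSet t t' then
      (if t ∈ 𝒮 ω then f t else 0) * (if t' ∈ 𝒮 ω then f t' else 0) else 0) μ := by
    intro t t'
    split_ifs
    exacts [integrable_ite_mul_ite (hmeas t) (hmeas t') _ _, integrable_zero _ _ _]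
  simp only [groupSumSq_eq_sum_pairs]
  rw [integral_finsetSum _ fun t _ ↦ integrable_finsetSum _ fun t' _ ↦ hint t t']
  refine sum_congr rfl fun t _ ↦ ?_
  rw [integral_finsetSum _ fun t' _ ↦ hint t t']
  refine sum_congr rfl fun t' _ ↦ ?_
  split_ifs
  exacts [integral_ite_mul_ite (hmeas t) (hmeas t') _ _, integral_zero _ _]

theorem gus_yS_expectation_general
    (𝒮 : Ω → Finset (∀ i, R i)) (hmeas : ∀ t, MeasurableSet {ω | t ∈ 𝒮 ω}) (b : Finset ι → ℝ)
    (hB : ∀ t t', μ.real {ω | t ∈ 𝒮 ω ∧ t' ∈ 𝒮 ω} = b (agreementSet t t'))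
    (f : (∀ i, R i) → A) (S : Finset ι) :
    ∫ ω, groupSumSq S (fun t ↦ if t ∈ 𝒮 ω then f t else 0) ∂μ =
      ∑ T ∈ Sᶜ.powerset, moebiusTransform (fun U ↦ b (S ∪ U)) T • groupSumSq (S ∪ T) f := by
  rw [integral_groupSumSq_sample μ 𝒮 hmeas, sum_moebiusTransform_smul_groupSumSq]
  simp only [hB]

end Sampling

/-- Expected value of the sample-based group-by quantities `Y_S`:
for a GUS sample `𝒮` with parameters `(a, b)`,
`E[Y_S] = ∑_{T ⊆ Sᶜ} d_{S,T} · y_{S ∪ T}` where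
`d_{S,T} = ∑_{U ⊆ T} (−1)^{|T|−|U|} b (S ∪ U)`. -/
theorem gus_yS_expectation
    {ι : Type*} [Fintype ι] [DecidableEq ι]
    {R : ι → Type*} [∀ i, Fintype (R i)] [∀ i, Nonempty (R i)] [∀ i, DecidableEq (R i)]
    {Ω : Type*} [MeasurableSpace Ω] (μ : Measure Ω) [IsProbabilityMeasure μ]
    (𝒮 : Ω → Finset (∀ i, R i)) (hmeas : ∀ t, MeasurableSet {ω | t ∈ 𝒮 ω})
    (a : ℝ) (b : Finset ι → ℝ)
    (hA : ∀ t, (μ {ω | t ∈ 𝒮 ω}).toReal = a)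
    (hB : ∀ t t', (μ {ω | t ∈ 𝒮 ω ∧ t' ∈ 𝒮 ω}).toReal =
      b (Finset.univ.filter fun i => t i = t' i))
    (f : (∀ i, R i) → ℝ) (S : Finset ι) :
    ∫ ω, (∑ u : ∀ i : {x // x ∈ S}, R i.1,
        (∑ v : ∀ i : {x // x ∈ Sᶜ}, R i.1,
          if mergeTuple S u v ∈ 𝒮 ω then f (mergeTuple S u v) else 0) ^ 2) ∂μ =
      ∑ T ∈ Sᶜ.powerset,
        (∑ U ∈ T.powerset, (-1 : ℝ) ^ (T.card - U.card) * b (S ∪ U)) *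
          (∑ u : ∀ i : {x // x ∈ S ∪ T}, R i.1,
            (∑ v : ∀ i : {x // x ∈ (S ∪ T)ᶜ}, R i.1, f (mergeTuple (S ∪ T) u v)) ^ 2) :=
  gus_yS_expectation_general μ 𝒮 hmeas b hB f S
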